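/- For every finite simple graph G on vertex set [n] = {1, …, n} and every field k, the height of the binomial edge ideal J_G in R = k[x_1, …, x_n, y_1, …, y_n] equals b_G; that is, hgt(J_G) = min over all subsets S ⊆ [n] of (2·|S| + (n − |S|) − c(S)). -/

import Mathlib

open MvPolynomial

/-- The height of an ideal: the infimum of the heights (in the prime spectrum)
of the prime ideals containing it. -/
noncomputable def idealHeight {R : Type*} [CommRing R] (I : Ideal R) : ℕ∞ :=
  ⨅ (p : PrimeSpectrum R) (_ : I ≤ p.asIdeal), Order.height p

/-- The binomial edge ideal of a graph `G` on `[n]`, inside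
`k[x_1,…,x_n,y_1,…,y_n]`, where `x_i` is the variable `Sum.inl i` and `y_i` is
the variable `Sum.inr i`. -/
noncomputable def binomialEdgeIdeal (n : ℕ) (k : Type*) [Field k]
    (G : SimpleGraph (Fin n)) : Ideal (MvPolynomial (Fin n ⊕ Fin n) k) :=
  Ideal.span {f | ∃ i j : Fin n, G.Adj i j ∧
    f = X (Sum.inl i) * X (Sum.inr j) - X (Sum.inl j) * X (Sum.inr i)}

/-- `c(S)`: the number of connected components of the induced subgraph of `G`
on the complement of `S`. -/
noncomputable def numComponents {n : ℕ} (G : SimpleGraph (Fin n))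
    (S : Finset (Fin n)) : ℕ :=
  Nat.card ((G.induce ((↑S : Set (Fin n))ᶜ)).ConnectedComponent)

/-- `b_G(S) = 2|S| + (n - |S|) - c(S)`. -/
noncomputable def bOf {n : ℕ} (G : SimpleGraph (Fin n)) (S : Finset (Fin n)) : ℕ :=
  2 * S.card + (n - S.card) - numComponents G S

/-- `b_G`: the minimum of `b_G(S)` over all subsets `S ⊆ [n]`. -/
noncomputable def bMin {n : ℕ} (G : SimpleGraph (Fin n)) : ℕ :=
  sInf (Set.range (bOf G))

/-!
In a polynomial ring over a field, height and transcendence degree of the residue domain add up to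
the number of variables: a prime of `R[X]` lying over a prime `p` of a Noetherian ring `R` either
has the height of `p` and a transcendental residue class of `X`, or has height one more and an
algebraic one. The height of `J_G` thus measures the largest transcendence degree of a
domain `A = R/P` with `J_G ⊆ P`. If `S` is the set of vertices at which both variables lie in `P`,
then off `S` the vectors `(x_i, y_i)` are nonzero, and parallel along edges, hence on connected
components of `G ∖ S`. So one coordinate per vertex and one slope per component generate `A` up to
algebraic elements, which bounds the transcendence degree by `(n - |S|) + c(S) = 2n - b_G(S)`.
Choosing these parameters freely gives, for every `S`, a prime that attains the bound.
-/

section DimensionFormula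

open Cardinal

section Algebraic

variable {R S A : Type*} [CommRing R] [CommRing S] [CommRing A]
  [Algebra R S] [Algebra S A] [Algebra R A] [IsScalarTower R S A]

lemma toENat_trdeg_add_eq [Nontrivial R] [NoZeroDivisors A] [FaithfulSMul R S]
    [FaithfulSMul S A] :
    toENat (Algebra.trdeg R S) + toENat (Algebra.trdeg S A) = toENat (Algebra.trdeg R A) := by
  simpa only [map_add, toENat_lift] using congrArg toENat (lift_trdeg_add_eq R S A)

lemma isAlgebraic_of_adjoin_eq_top [IsDomain S] {s : Set A} (hs : Algebra.adjoin R s = ⊤)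
    (halg : ∀ a ∈ s, IsAlgebraic S a) : Algebra.IsAlgebraic S A where
  isAlgebraic a := by
    have hle : Algebra.adjoin R s ≤ (Subalgebra.algebraicClosure S A).restrictScalars R :=
      Algebra.adjoin_le halg
    exact hle (hs ▸ Algebra.mem_top)

lemma adjoin_image_eq_top_of_surjective {B : Type*} [CommRing B] [Algebra R B] {f : A →ₐ[R] B}
    (hf : Function.Surjective f) {s : Set A} (hs : Algebra.adjoin R s = ⊤) :
    Algebra.adjoin R (f '' s) = ⊤ := by
  rw [← AlgHom.map_adjoin, hs, Algebra.map_top]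
  exact (AlgHom.range_eq_top f).mpr hf

end Algebraic

/-- The dimension formula `ht P + trdeg (A/P over R/p) = ht p + n` for all primes `P` of the
`R`-algebra `A` and `p = P ∩ R`. Transcendence degrees are truncated to `ℕ∞`, where heights live. -/
def SatisfiesDimensionFormula (R A : Type*) [CommRing R] [CommRing A] [Algebra R A]
    (n : ℕ∞) : Prop :=
  ∀ (p : Ideal R) (P : Ideal A) [P.IsPrime] [P.LiesOver p],
    P.height + toENat (Algebra.trdeg (R ⧸ p) (A ⧸ P)) = p.height + n

namespace SatisfiesDimensionFormula

variable {R A B : Type*} [CommRing R] [CommRing A] [CommRing B] [Algebra R A] [Algebra R B]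
  {m n : ℕ∞}

lemma refl (R : Type*) [CommRing R] : SatisfiesDimensionFormula R R 0 := by
  intro p P _ _
  obtain rfl : p = P := Ideal.over_def P p
  -- Without this, instance search finds `Algebra.id (R ⧸ p)`, which is not defeq to it.
  let := Ideal.Quotient.algebraOfLiesOver p p
  rw [trdeg_eq_zero, map_zero]

lemma congr (h : SatisfiesDimensionFormula R A n) (e : A ≃ₐ[R] B) :
    SatisfiesDimensionFormula R B n := by
  intro p P _ _
  have hheight : (P.comap e).height = P.height := e.toRingEquiv.height_comap P
  have htrdeg :=
    (Ideal.Quotient.algEquivOfEqComap (P := P.comap e) (Q := P) p e rfl).lift_trdeg_eq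
  rw [← hheight, ← toENat_lift, ← htrdeg, toENat_lift]
  exact h p (P.comap e)

lemma trans [Algebra A B] [IsScalarTower R A B] (hRA : SatisfiesDimensionFormula R A m)
    (hAB : SatisfiesDimensionFormula A B n) : SatisfiesDimensionFormula R B (m + n) := by
  intro p P _ _
  have hp : p.IsPrime := Ideal.isPrime_of_liesOver P p
  let q := P.under A
  have htower : IsScalarTower (R ⧸ p) (A ⧸ q) (B ⧸ P) := by
    refine .of_algebraMap_eq fun r ↦ ?_
    obtain ⟨r, rfl⟩ := Ideal.Quotient.mk_surjective r
    exact congrArg (Ideal.Quotient.mk P) (IsScalarTower.algebraMap_apply R A B r)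
  calc P.height + toENat (Algebra.trdeg (R ⧸ p) (B ⧸ P))
      = (P.height + toENat (Algebra.trdeg (A ⧸ q) (B ⧸ P))) +
          toENat (Algebra.trdeg (R ⧸ p) (A ⧸ q)) := by
        rw [← toENat_trdeg_add_eq (S := A ⧸ q), add_assoc, add_comm (toENat _)]
    _ = (q.height + toENat (Algebra.trdeg (R ⧸ p) (A ⧸ q))) + n := by
        rw [hAB q P, add_right_comm]
    _ = p.height + (m + n) := by rw [hRA p q, add_assoc]

lemma height_add_trdeg {k : Type*} [Field k] [Algebra k A] (h : SatisfiesDimensionFormula k A n)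
    (P : Ideal A) [P.IsPrime] : P.height + toENat (Algebra.trdeg k (A ⧸ P)) = n := by
  let p := P.under k
  have hp : p = ⊥ := Ideal.eq_bot_of_prime p
  have : FaithfulSMul k (k ⧸ p) := inferInstance
  have : Algebra.IsAlgebraic k (k ⧸ p) := inferInstance
  rw [← toENat_trdeg_add_eq (S := k ⧸ p), trdeg_eq_zero, map_zero, zero_add,
    h p P, hp, Ideal.height_bot, zero_add]

end SatisfiesDimensionFormula

section Polynomial

open scoped Polynomial

lemma height_eq_one_of_liesOver_bot {D : Type*} [CommRing D] [IsDomain D] {Q : Ideal D[X]}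
    [Q.IsPrime] [Q.LiesOver (⊥ : Ideal D)] (hQ : Q ≠ ⊥) : Q.height = 1 := by
  let K := FractionRing D
  let := Polynomial.algebra D K
  have := Polynomial.isLocalization (nonZeroDivisors D) K
  have hdisj : Disjoint ((nonZeroDivisors D).map (Polynomial.C : D →+* D[X]) : Set D[X]) Q := by
    rw [Set.disjoint_left]
    rintro _ ⟨d, hd, rfl⟩ hdQ
    exact nonZeroDivisors.ne_zero hd ((Ideal.mem_of_liesOver Q ⊥ d).mpr hdQ)
  have := IsLocalization.isPrime_of_isPrime_disjoint _ K[X] Q ‹_› hdisj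
  apply le_antisymm
  · have hdim : ringKrullDim K[X] = 1 := by
      rw [Polynomial.ringKrullDim_of_isNoetherianRing, ringKrullDim_eq_zero_of_field, zero_add]
    rw [← IsLocalization.height_map_of_disjoint (S := K[X]) _ Q hdisj]
    exact_mod_cast Ideal.height_le_ringKrullDim_of_isPrime.trans_eq hdim
  · rwa [Order.one_le_iff_ne_zero, Ne, Ideal.height_eq_zero_iff_eq_bot]

lemma isAlgebraic_quotient_of_ne_bot {D : Type*} [CommRing D] [IsDomain D] {Q : Ideal D[X]}
    (hQ : Q ≠ ⊥) : Algebra.IsAlgebraic D (D[X] ⧸ Q) := by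
  obtain ⟨f, hfQ, hf⟩ := Q.ne_bot_iff.mp hQ
  have hgen := adjoin_image_eq_top_of_surjective (Ideal.Quotient.mkₐ_surjective D Q)
    (Polynomial.adjoin_X (R := D))
  refine isAlgebraic_of_adjoin_eq_top hgen ?_
  rintro _ ⟨_, rfl, rfl⟩
  refine ⟨f, hf, ?_⟩
  rw [Polynomial.aeval_algHom_apply, Polynomial.aeval_X_left_apply]
  exact Ideal.Quotient.eq_zero_iff_mem.mpr hfQ

lemma height_add_trdeg_of_liesOver_bot {D : Type*} [CommRing D] [IsDomain D] (Q : Ideal D[X])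
    [Q.IsPrime] [Q.LiesOver (⊥ : Ideal D)] :
    Q.height + toENat (Algebra.trdeg D (D[X] ⧸ Q)) = 1 := by
  rcases eq_or_ne Q ⊥ with rfl | hQ
  · rw [Ideal.height_bot, (AlgEquiv.quotientBot D D[X]).trdeg_eq, Polynomial.trdeg_of_isDomain,
      map_one, zero_add]
  · have := isAlgebraic_quotient_of_ne_bot hQ
    rw [height_eq_one_of_liesOver_bot hQ, trdeg_eq_zero, map_zero, add_zero]

variable {R : Type*} [CommRing R]

/-- The canonical map `(R/p)[X] → R[X]/P` for an ideal `P` lying over `p`; its kernel is the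
image of `P` in `(R/p)[X] ≅ R[X]/pR[X]`, i.e. the point of the fibre over `p` given by `P`. -/
noncomputable def fiberMap (p : Ideal R) (P : Ideal R[X]) [P.LiesOver p] :
    (R ⧸ p)[X] →ₐ[R ⧸ p] R[X] ⧸ P :=
  Polynomial.aeval (Ideal.Quotient.mk P Polynomial.X)

variable (p : Ideal R) (P : Ideal R[X]) [P.LiesOver p]

lemma fiberMap_map_mk (f : R[X]) :
    fiberMap p P (f.map (Ideal.Quotient.mk p)) = Ideal.Quotient.mk P f := by
  have hcomp : (algebraMap (R ⧸ p) (R[X] ⧸ P)).comp (Ideal.Quotient.mk p) =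
    (Ideal.Quotient.mk P).comp Polynomial.C := rfl
  rw [fiberMap, Polynomial.aeval_def, Polynomial.eval₂_map, hcomp, ← Polynomial.hom_eval₂,
    Polynomial.eval₂_C_X]

lemma fiberMap_surjective : Function.Surjective (fiberMap p P) := by
  intro a
  obtain ⟨f, rfl⟩ := Ideal.Quotient.mk_surjective a
  exact ⟨_, fiberMap_map_mk p P f⟩

instance ker_fiberMap_liesOver_bot :
    (RingHom.ker (fiberMap p P)).LiesOver (⊥ : Ideal (R ⧸ p)) := by
  refine ⟨(eq_bot_iff.mpr fun a ha ↦ ?_).symm⟩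
  rw [Ideal.mem_comap, RingHom.mem_ker, AlgHom.commutes] at ha
  exact (map_eq_zero_iff _ (FaithfulSMul.algebraMap_injective (R ⧸ p) (R[X] ⧸ P))).mp ha

lemma height_map_mk_eq_height_ker_fiberMap :
    (P.map (Ideal.Quotient.mk (p.map (algebraMap R R[X])))).height =
      (RingHom.ker (fiberMap p P)).height := by
  let e : R[X] ⧸ p.map (algebraMap R R[X]) ≃+* (R ⧸ p)[X] :=
    (Ideal.polynomialQuotientEquivQuotientPolynomial p).symm
  have hle : p.map (algebraMap R R[X]) ≤ P := by
    rw [Ideal.map_le_iff_le_comap, Ideal.over_def P p]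
  rw [← e.height_comap]
  congr 1
  ext a
  obtain ⟨f, rfl⟩ := Ideal.Quotient.mk_surjective a
  have he : e (Ideal.Quotient.mk _ f) = f.map (Ideal.Quotient.mk p) :=
    Ideal.polynomialQuotientEquivQuotientPolynomial_symm_mk p f
  rw [Ideal.mem_quotient_iff_mem hle, Ideal.mem_comap, he, RingHom.mem_ker, fiberMap_map_mk,
    Ideal.Quotient.eq_zero_iff_mem]

lemma satisfiesDimensionFormula_polynomial (R : Type*) [CommRing R] [IsNoetherianRing R] :
    SatisfiesDimensionFormula R R[X] 1 := by
  intro p P _ _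
  have hp : p.IsPrime := Ideal.isPrime_of_liesOver P p
  let Q := RingHom.ker (fiberMap p P)
  have hQ : Q.IsPrime := RingHom.ker_isPrime _
  have htrdeg : Algebra.trdeg (R ⧸ p) ((R ⧸ p)[X] ⧸ Q) = Algebra.trdeg (R ⧸ p) (R[X] ⧸ P) :=
    (Ideal.quotientKerAlgEquivOfSurjective (fiberMap_surjective p P)).trdeg_eq
  rw [Ideal.height_eq_height_add_of_liesOver_of_hasGoingDown p P,
    height_map_mk_eq_height_ker_fiberMap, ← htrdeg, add_assoc, height_add_trdeg_of_liesOver_bot]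

end Polynomial

lemma satisfiesDimensionFormula_mvPolynomial (R : Type*) [CommRing R] [IsNoetherianRing R]
    (σ : Type*) [Finite σ] : SatisfiesDimensionFormula R (MvPolynomial σ R) (ENat.card σ) := by
  induction σ using Finite.induction_empty_option with
  | of_equiv e ih => exact ENat.card_congr e ▸ ih.congr (renameEquiv R e)
  | h_empty =>
    simpa using (SatisfiesDimensionFormula.refl R).congr (isEmptyAlgEquiv R PEmpty).symm
  | @h_option σ _ ih =>
    have hcard : ENat.card (Option σ) = ENat.card σ + 1 := by simp
    rw [hcard]
    exact (ih.trans (satisfiesDimensionFormula_polynomial _)).congr (optionEquivLeft R σ).symm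

end DimensionFormula

section ParallelVectors

variable {V : Type*} (H : SimpleGraph V) {A : Type*} [CommRing A] {x y : V → A}

lemma mul_eq_mul_of_reachable [NoZeroDivisors A]
    (hadj : ∀ u v, H.Adj u v → x u * y v = x v * y u) (hne : ∀ v, x v ≠ 0 ∨ y v ≠ 0) {u w : V}
    (huw : H.Reachable u w) : x u * y w = x w * y u := by
  obtain ⟨p⟩ := huw
  induction p with
  | nil => rfl
  | @cons u v w hadj_uv _ ih =>
    have huv : x u * y v = x v * y u := hadj u v hadj_uv
    rcases hne v with hv | hv <;> apply mul_left_cancel₀ hv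
    · linear_combination x u * ih + x w * huv
    · linear_combination y u * ih + y w * huv

lemma toENat_trdeg_le_card_add_card_connectedComponent [IsDomain A] {k : Type*} [CommRing k]
    [Algebra k A]
    (hadj : ∀ u v, H.Adj u v → x u * y v = x v * y u) (hne : ∀ v, x v ≠ 0 ∨ y v ≠ 0)
    (hgen : Algebra.adjoin k (Set.range x ∪ Set.range y) = ⊤) :
    Cardinal.toENat (Algebra.trdeg k A) ≤ ENat.card V + ENat.card H.ConnectedComponent := by
  classical
  choose rep hrep using fun c : H.ConnectedComponent ↦ c.exists_rep
  let z (v : V) : A := if x v = 0 then y v else x v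
  let s : Set A := Set.range z ∪ Set.range (y ∘ rep)
  have hs {a : A} (ha : a ∈ s) : IsAlgebraic (Algebra.adjoin k s) a :=
    isAlgebraic_algebraMap (⟨a, Algebra.subset_adjoin ha⟩ : Algebra.adjoin k s)
  have hx (v : V) : IsAlgebraic (Algebra.adjoin k s) (x v) := by
    by_cases hv : x v = 0
    · exact hv ▸ isAlgebraic_zero
    · exact hs (.inl ⟨v, if_neg hv⟩)
  have hy (v : V) : IsAlgebraic (Algebra.adjoin k s) (y v) := by
    by_cases hv : x v = 0
    · exact hs (.inl ⟨v, if_pos hv⟩)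
    let r := rep (H.connectedComponentMk v)
    have hvr : x v * y r = x r * y v :=
      mul_eq_mul_of_reachable H hadj hne (SimpleGraph.ConnectedComponent.eq.mp (hrep _)).symm
    have hr : x r ≠ 0 := fun hr ↦ by
      rw [hr, zero_mul] at hvr
      exact (mul_ne_zero hv ((hne r).resolve_left (not_not.mpr hr))) hvr
    refine (hx r).of_mul (mem_nonZeroDivisors_of_ne_zero hr) (hvr ▸ (hx v).mul (hs ?_))
    exact .inr ⟨_, rfl⟩
  have halg : Algebra.IsAlgebraic (Algebra.adjoin k s) A := by
    refine isAlgebraic_of_adjoin_eq_top hgen ?_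
    rintro _ (⟨v, rfl⟩ | ⟨v, rfl⟩)
    exacts [hx v, hy v]
  calc Cardinal.toENat (Algebra.trdeg k A)
      ≤ s.encard := Cardinal.toENat.monotone' (Algebra.IsAlgebraic.trdeg_le_cardinalMk k s)
    _ ≤ (Set.range z).encard + (Set.range (y ∘ rep)).encard := Set.encard_union_le _ _
    _ ≤ ENat.card V + ENat.card H.ConnectedComponent := by
      simp only [← Set.image_univ, ← Set.encard_univ]
      exact add_le_add (Set.encard_image_le _ _) (Set.encard_image_le _ _)

end ParallelVectors

section ComponentPrime

variable {V : Type*} (k : Type*) [Field k] (G : SimpleGraph V) (S : Set V)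

open Classical in
/-- The homomorphism `x_v ↦ t_v`, `y_v ↦ t_v u_c` for a vertex `v ∉ S` in the connected component
`c` of `G ∖ S`, and `x_v, y_v ↦ 0` for `v ∈ S`. The variables `t_v` and `u_c` are indexed by
`Sum.inl` and `Sum.inr`. -/
noncomputable def componentParametrization : MvPolynomial (V ⊕ V) k →ₐ[k]
    MvPolynomial (↥Sᶜ ⊕ (G.induce Sᶜ).ConnectedComponent) k :=
  aeval <| Sum.elim
    (fun v ↦ if hv : v ∈ Sᶜ then X (Sum.inl ⟨v, hv⟩) else 0)
    (fun v ↦ if hv : v ∈ Sᶜ then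
      X (Sum.inl ⟨v, hv⟩) * X (Sum.inr ((G.induce Sᶜ).connectedComponentMk ⟨v, hv⟩)) else 0)

/-- The prime ideal `P_S(G)` of the points `(x_v, y_v)` that vanish at the vertices of `S` and are
parallel on each connected component of `G ∖ S`. It is encoded as the kernel of a parametrization
rather than by generators, so that its primality and dimension can be read off. -/
noncomputable def componentPrime : Ideal (MvPolynomial (V ⊕ V) k) :=
  RingHom.ker (componentParametrization k G S)

instance componentPrime_isPrime : (componentPrime k G S).IsPrime :=
  RingHom.ker_isPrime _

variable {S}

@[simp] lemma componentParametrization_X_inl_of_mem {v : V} (hv : v ∈ S) :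
    componentParametrization k G S (X (Sum.inl v)) = 0 := by
  simp [componentParametrization, hv]

@[simp] lemma componentParametrization_X_inr_of_mem {v : V} (hv : v ∈ S) :
    componentParametrization k G S (X (Sum.inr v)) = 0 := by
  simp [componentParametrization, hv]

@[simp] lemma componentParametrization_X_inl (v : ↥Sᶜ) :
    componentParametrization k G S (X (Sum.inl v.1)) = X (Sum.inl v) := by
  rw [componentParametrization, aeval_X, Sum.elim_inl, dif_pos v.2]

@[simp] lemma componentParametrization_X_inr (v : ↥Sᶜ) :
    componentParametrization k G S (X (Sum.inr v.1)) =
      X (Sum.inl v) * X (Sum.inr ((G.induce Sᶜ).connectedComponentMk v)) := by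
  rw [componentParametrization, aeval_X, Sum.elim_inr, dif_pos v.2]

variable (S)

lemma mul_sub_mul_mem_componentPrime {v w : V} (hvw : G.Adj v w) :
    X (Sum.inl v) * X (Sum.inr w) - X (Sum.inl w) * X (Sum.inr v) ∈ componentPrime k G S := by
  rw [componentPrime, RingHom.mem_ker, map_sub, map_mul, map_mul]
  by_cases hv : v ∈ S
  · simp [hv]
  by_cases hw : w ∈ S
  · simp [hw]
  lift v to ↥Sᶜ using hv
  lift w to ↥Sᶜ using hw
  have hcomp : (G.induce Sᶜ).connectedComponentMk v = (G.induce Sᶜ).connectedComponentMk w :=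
    SimpleGraph.ConnectedComponent.eq.mpr (SimpleGraph.Adj.reachable hvw)
  simp only [componentParametrization_X_inl, componentParametrization_X_inr, hcomp]
  ring

lemma isAlgebraic_range_componentParametrization :
    Algebra.IsAlgebraic (componentParametrization k G S).range
      (MvPolynomial (↥Sᶜ ⊕ (G.induce Sᶜ).ConnectedComponent) k) := by
  have hrange (f) : IsAlgebraic (componentParametrization k G S).range
      (componentParametrization k G S f) :=
    isAlgebraic_algebraMap ((componentParametrization k G S).rangeRestrict f)
  have hinl (v : ↥Sᶜ) := componentParametrization_X_inl k G v ▸ hrange (X (Sum.inl v.1))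
  refine isAlgebraic_of_adjoin_eq_top adjoin_range_X ?_
  rintro _ ⟨v | c, rfl⟩
  · exact hinl v
  · obtain ⟨v, rfl⟩ := c.exists_rep
    refine (hinl v).of_mul (mem_nonZeroDivisors_of_ne_zero (X_ne_zero _)) ?_
    exact componentParametrization_X_inr k G v ▸ hrange (X (Sum.inr v.1))

lemma toENat_trdeg_quotient_componentPrime :
    Cardinal.toENat (Algebra.trdeg k (MvPolynomial (V ⊕ V) k ⧸ componentPrime k G S)) =
      ENat.card ↥Sᶜ + ENat.card (G.induce Sᶜ).ConnectedComponent := by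
  let B := MvPolynomial (↥Sᶜ ⊕ (G.induce Sᶜ).ConnectedComponent) k
  let φ := componentParametrization k G S
  have halg : Algebra.IsAlgebraic φ.range B := isAlgebraic_range_componentParametrization k G S
  calc Cardinal.toENat (Algebra.trdeg k (MvPolynomial (V ⊕ V) k ⧸ componentPrime k G S))
      = Cardinal.toENat (Algebra.trdeg k φ.range) :=
        congrArg Cardinal.toENat (Ideal.quotientKerEquivRange φ).trdeg_eq
    _ = Cardinal.toENat (Algebra.trdeg k φ.range) + Cardinal.toENat (Algebra.trdeg φ.range B) := by
        rw [trdeg_eq_zero (R := φ.range) (A := B), map_zero, add_zero]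
    _ = Cardinal.toENat (Algebra.trdeg k B) := toENat_trdeg_add_eq
    _ = ENat.card ↥Sᶜ + ENat.card (G.induce Sᶜ).ConnectedComponent := by
        rw [MvPolynomial.trdeg_of_isDomain, Cardinal.toENat_lift, ← ENat.card, ENat.card_sum]

end ComponentPrime

section CommonZeros

variable {V k : Type*} [Field k] {G : SimpleGraph V} {S : Set V}
  {P : Ideal (MvPolynomial (V ⊕ V) k)}

lemma adjoin_range_mk_X_eq_top (hS : ∀ v ∈ S, X (Sum.inl v) ∈ P ∧ X (Sum.inr v) ∈ P) :
    Algebra.adjoin k (Set.range (fun v : ↥Sᶜ ↦ Ideal.Quotient.mk P (X (Sum.inl v.1))) ∪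
      Set.range (fun v : ↥Sᶜ ↦ Ideal.Quotient.mk P (X (Sum.inr v.1)))) = ⊤ := by
  rw [eq_top_iff, ← adjoin_image_eq_top_of_surjective (Ideal.Quotient.mkₐ_surjective k P)
    (adjoin_range_X (R := k) (σ := V ⊕ V))]
  refine Algebra.adjoin_le ?_
  rintro _ ⟨_, ⟨v | v, rfl⟩, rfl⟩ <;> by_cases hv : v ∈ S
  · exact Ideal.Quotient.eq_zero_iff_mem.mpr (hS v hv).1 ▸ zero_mem _
  · exact Algebra.subset_adjoin (.inl ⟨⟨v, hv⟩, rfl⟩)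
  · exact Ideal.Quotient.eq_zero_iff_mem.mpr (hS v hv).2 ▸ zero_mem _
  · exact Algebra.subset_adjoin (.inr ⟨⟨v, hv⟩, rfl⟩)

lemma toENat_trdeg_quotient_le_card_add_card_connectedComponent [P.IsPrime]
    (hS : ∀ v, v ∈ S ↔ X (Sum.inl v) ∈ P ∧ X (Sum.inr v) ∈ P)
    (hP : ∀ v w, G.Adj v w →
      X (Sum.inl v) * X (Sum.inr w) - X (Sum.inl w) * X (Sum.inr v) ∈ P) :
    Cardinal.toENat (Algebra.trdeg k (MvPolynomial (V ⊕ V) k ⧸ P)) ≤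
      ENat.card ↥Sᶜ + ENat.card (G.induce Sᶜ).ConnectedComponent := by
  refine toENat_trdeg_le_card_add_card_connectedComponent _ (fun v w hvw ↦ ?_) (fun v ↦ ?_)
    (adjoin_range_mk_X_eq_top fun v ↦ (hS v).mp)
  · rw [← map_mul, ← map_mul, Ideal.Quotient.eq]
    exact hP v w hvw
  · rw [← not_and_or, Ideal.Quotient.eq_zero_iff_mem, Ideal.Quotient.eq_zero_iff_mem, ← hS]
    exact v.2

end CommonZeros

section Height

variable {n : ℕ} {k : Type*} [Field k] (G : SimpleGraph (Fin n))

lemma bOf_add_card_add_card_connectedComponent (S : Finset (Fin n)) :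
    (bOf G S : ℕ∞) + (ENat.card ↥((S : Set (Fin n))ᶜ) +
      ENat.card (G.induce (S : Set (Fin n))ᶜ).ConnectedComponent) = ENat.card (Fin n ⊕ Fin n) := by
  have hcompl : Nat.card ↥((S : Set (Fin n))ᶜ) = n - S.card := by
    rw [Nat.card_coe_set_eq, Set.ncard_compl, Set.ncard_coe_finset, Nat.card_fin]
  have hcomp : numComponents G S ≤ n - S.card :=
    hcompl ▸ Nat.card_le_card_of_surjective _ fun c ↦ c.exists_rep
  have hS : S.card ≤ n := by simpa using S.card_le_univ
  simp only [ENat.card_eq_coe_natCard, hcompl, Nat.card_sum, Nat.card_fin]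
  rw [← numComponents]
  norm_cast
  rw [bOf]
  lia

lemma height_add_trdeg_quotient (P : Ideal (MvPolynomial (Fin n ⊕ Fin n) k)) [P.IsPrime] :
    P.height + Cardinal.toENat (Algebra.trdeg k (MvPolynomial (Fin n ⊕ Fin n) k ⧸ P)) =
      ENat.card (Fin n ⊕ Fin n) :=
  (satisfiesDimensionFormula_mvPolynomial k (Fin n ⊕ Fin n)).height_add_trdeg P

variable (k) in
lemma height_componentPrime (S : Finset (Fin n)) :
    (componentPrime k G (S : Set (Fin n))).height = bOf G S := by
  have hfin : ENat.card ↥((S : Set (Fin n))ᶜ) +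
      ENat.card (G.induce (S : Set (Fin n))ᶜ).ConnectedComponent ≠ ⊤ := by
    simp
  apply ENat.add_left_injective_of_ne_top hfin
  beta_reduce
  rw [bOf_add_card_add_card_connectedComponent, ← toENat_trdeg_quotient_componentPrime k G,
    height_add_trdeg_quotient]

variable (k) in
lemma binomialEdgeIdeal_le_componentPrime (S : Set (Fin n)) :
    binomialEdgeIdeal n k G ≤ componentPrime k G S := by
  rw [binomialEdgeIdeal, Ideal.span_le]
  rintro _ ⟨i, j, hij, rfl⟩
  exact mul_sub_mul_mem_componentPrime k G S hij

variable {G} in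
lemma exists_bOf_le_height {P : Ideal (MvPolynomial (Fin n ⊕ Fin n) k)} [P.IsPrime]
    (hP : binomialEdgeIdeal n k G ≤ P) : ∃ S : Finset (Fin n), (bOf G S : ℕ∞) ≤ P.height := by
  classical
  let S : Finset (Fin n) := {i | X (Sum.inl i) ∈ P ∧ X (Sum.inr i) ∈ P}
  have hS (i : Fin n) : i ∈ (S : Set (Fin n)) ↔ X (Sum.inl i) ∈ P ∧ X (Sum.inr i) ∈ P := by
    simp [S]
  have htrdeg := toENat_trdeg_quotient_le_card_add_card_connectedComponent hS
    fun i j hij ↦ hP (Ideal.subset_span ⟨i, j, hij, rfl⟩)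
  refine ⟨S, (ENat.add_le_add_iff_right (ne_top_of_le_ne_top ?_ htrdeg)).mp ?_⟩
  · simp
  · rw [height_add_trdeg_quotient, ← bOf_add_card_add_card_connectedComponent G S]
    gcongr

end Height

theorem height_binomialEdgeIdeal_eq_bMin (n : ℕ) (k : Type*) [Field k]
    (G : SimpleGraph (Fin n)) :
    idealHeight (binomialEdgeIdeal n k G) = (bMin G : ℕ∞) := by
  apply le_antisymm
  · obtain ⟨S, hS⟩ : bMin G ∈ Set.range (bOf G) := Nat.sInf_mem (Set.range_nonempty _)
    let P : PrimeSpectrum _ := ⟨componentPrime k G (S : Set (Fin n)), inferInstance⟩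
    calc idealHeight (binomialEdgeIdeal n k G)
        ≤ Order.height P := iInf₂_le P (binomialEdgeIdeal_le_componentPrime k G _)
      _ = bMin G := by
        rw [← PrimeSpectrum.height_eq_orderHeight, ← hS]
        exact height_componentPrime k G S
  · refine le_iInf₂ fun P hP ↦ ?_
    obtain ⟨S, hS⟩ := exists_bOf_le_height hP
    calc (bMin G : ℕ∞)
        ≤ bOf G S := Nat.cast_le.mpr (Nat.sInf_le ⟨S, rfl⟩)
      _ ≤ P.asIdeal.height := hS
      _ = Order.height P := PrimeSpectrum.height_eq_orderHeight P
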